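/- arXiv:0704.1463 — 8 statements merged into one kernel-verified Lean document; each statement's English description precedes it below -/
import Mathlib

section
/- For every real number μ with 0 < μ < 1, the series Σ_{k=1}^∞ k·e^{−kμ}(kμ)^{k−1}/k! converges and its sum equals 1/(1−μ) (i.e. the Borel(μ) distribution has mean 1/(1−μ)). -/
/-- The Borel(μ) weight `p_μ(k) = e^{-kμ} (kμ)^{k-1} / k!`, written for `k = n+1`. -/
noncomputable def borelWeight (μ : ℝ) (n : ℕ) : ℝ :=
  Real.exp (-((n : ℝ) + 1) * μ) * (((n : ℝ) + 1) * μ) ^ n / (Nat.factorial (n + 1) : ℝ)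

theorem borel_coef_le (n : ℕ) : ((n : ℝ) + 1) ^ n / (n.factorial : ℝ) ≤ Real.exp 1 * Real.exp 1 ^ n := by
  have h := Real.pow_div_factorial_le_exp ((n : ℝ) + 1) (by positivity) n
  refine h.trans (le_of_eq ?_)
  rw [← Real.exp_nat_mul, ← Real.exp_add]
  congr 1; ring

theorem borel_term (μ : ℝ) (n : ℕ) : ((n : ℝ) + 1) * borelWeight μ n =
    Real.exp (-μ) * ((((n : ℝ) + 1) ^ n / (n.factorial : ℝ)) * (μ * Real.exp (-μ)) ^ n) := by
  unfold borelWeight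
  have h1 : Real.exp (-((n : ℝ) + 1) * μ) = Real.exp (-μ) * Real.exp (-μ) ^ n := by
    rw [← Real.exp_nat_mul, ← Real.exp_add]
    congr 1; ring
  rw [h1, Nat.factorial_succ, mul_pow, mul_pow]
  push_cast
  have : (n.factorial : ℝ) ≠ 0 := by positivity
  have : (n : ℝ) + 1 ≠ 0 := by positivity
  field_simp

theorem borel_xlt {μ : ℝ} (h0 : 0 < μ) (h1 : μ < 1) : Real.exp 1 * (μ * Real.exp (-μ)) < 1 := by
  have h := Real.add_one_lt_exp (x := μ - 1) (by linarith)
  have e : Real.exp 1 * (μ * Real.exp (-μ)) = μ / Real.exp (μ - 1) := by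
    rw [Real.exp_sub, Real.exp_neg]; field_simp
  rw [e, div_lt_one (Real.exp_pos _)]
  linarith

theorem borel_summable {x : ℝ} (h0 : 0 ≤ x) (h1 : Real.exp 1 * x < 1) :
    Summable (fun n : ℕ => (((n : ℝ) + 1) ^ n / (n.factorial : ℝ)) * x ^ n) := by
  refine Summable.of_nonneg_of_le (fun n => by positivity) (fun n => ?_)
    ((summable_geometric_of_lt_one (by positivity) h1).mul_left (Real.exp 1))
  rw [mul_pow, ← mul_assoc]
  exact mul_le_mul_of_nonneg_right (borel_coef_le n) (by positivity)

noncomputable def borelT (μ : ℝ) (p : ℕ × ℕ) : ℝ :=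
  (((p.1 : ℝ) + 1) ^ p.1 * μ ^ p.1 / (p.1.factorial : ℝ)) *
    ((((p.1 : ℝ) + 1) * (-μ)) ^ p.2 / (p.2.factorial : ℝ))

theorem borelT_row (μ : ℝ) (n : ℕ) : HasSum (fun j => borelT μ (n, j))
    ((((n : ℝ) + 1) ^ n * μ ^ n / (n.factorial : ℝ)) * Real.exp (((n : ℝ) + 1) * (-μ))) := by
  unfold borelT
  apply HasSum.mul_left
  have := NormedSpace.expSeries_div_hasSum_exp (((n : ℝ) + 1) * (-μ))
  rwa [← Real.exp_eq_exp_ℝ] at this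

theorem borelT_diag (μ : ℝ) (m : ℕ) :
    ∑ p ∈ Finset.HasAntidiagonal.antidiagonal m, borelT μ p = μ ^ m := by
  have h1 := fwdDiff_iter_eq_sum_shift (1 : ℝ) (fun r : ℝ => r ^ m) m 1
  rw [fwdDiff_iter_eq_factorial] at h1
  rw [Finset.Nat.sum_antidiagonal_eq_sum_range_succ_mk]
  have hm : (m.factorial : ℝ) ≠ 0 := by positivity
  have h2 : μ ^ m = μ ^ m * ((m.factorial : ℝ) / m.factorial) := by field_simp
  rw [h2]
  have h3 : (m.factorial : ℝ) = ∑ k ∈ Finset.range (m + 1),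
    ((-1 : ℤ) ^ (m - k) * (m.choose k : ℤ)) • ((fun r : ℝ => r ^ m) (1 + k • (1:ℝ))) := by
    simpa using h1
  nth_rewrite 1 [h3]
  rw [Finset.sum_div, Finset.mul_sum]
  refine Finset.sum_congr rfl fun k hk => ?_
  have hk' : k ≤ m := by simpa [Nat.lt_succ_iff] using hk
  obtain ⟨j, rfl⟩ := Nat.exists_eq_add_of_le hk'
  have e := Nat.add_choose_mul_factorial_mul_factorial k j
  have e' : ((k + j).choose k : ℝ) * k.factorial * j.factorial = (k + j).factorial := by
    rw [Nat.choose_symm_add]; exact_mod_cast e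
  simp only [borelT, add_tsub_cancel_left, zsmul_eq_mul, nsmul_eq_mul, mul_one]
  rw [← e'] at hm ⊢
  push_cast
  have a1 : (k.factorial : ℝ) ≠ 0 := by positivity
  have a2 : (j.factorial : ℝ) ≠ 0 := by positivity
  have a3 : ((k + j).choose k : ℝ) ≠ 0 := by
    intro h; simp [h] at hm
  rw [mul_pow, neg_pow μ]
  field_simp
  ring

theorem borelT_summable {μ : ℝ} (h0 : 0 < μ) (h1 : μ < 1 / 10) : Summable (borelT μ) := by
  have hx : Real.exp 1 * (μ * Real.exp μ) < 1 := by
    have a := Real.exp_one_lt_d9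
    have b : Real.exp μ ≤ Real.exp 1 := Real.exp_le_exp.2 (by linarith)
    have c := Real.exp_pos 1
    calc Real.exp 1 * (μ * Real.exp μ) ≤ 3 * (1 / 10 * 3) := by gcongr <;> linarith
      _ < 1 := by norm_num
  have hn : ∀ p, ‖borelT μ p‖ = borelT (-μ) p * (-1) ^ p.1 := by
    intro p
    unfold borelT
    rw [norm_mul, norm_div, norm_div, norm_mul, norm_pow, norm_pow, norm_pow, norm_mul]
    have : ‖(p.1 : ℝ) + 1‖ = p.1 + 1 := by rw [Real.norm_of_nonneg]; positivity
    rw [this]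
    simp only [norm_neg, RCLike.norm_natCast, neg_neg, Real.norm_of_nonneg h0.le]
    rw [neg_pow μ p.1]
    have : ((-1 : ℝ) ^ p.1) * (-1) ^ p.1 = 1 := by rw [← mul_pow]; simp
    linear_combination (-(((p.1 : ℝ) + 1) ^ p.1 * μ ^ p.1 / (p.1.factorial : ℝ)) *
      ((((p.1 : ℝ) + 1) * (μ)) ^ p.2 / (p.2.factorial : ℝ))) * this
  apply Summable.of_norm
  rw [summable_prod_of_nonneg (fun p => norm_nonneg _)]
  have hr : ∀ n, HasSum (fun j => ‖borelT μ (n, j)‖) _ := fun n => by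
    simp only [hn]
    exact (borelT_row (-μ) n).mul_right _
  refine ⟨fun n => (hr n).summable, ?_⟩
  simp only [fun n => (hr n).tsum_eq]
  refine ((borel_summable (by positivity) hx).mul_left (Real.exp μ)).congr fun n => ?_
  have e1 : Real.exp (((n : ℝ) + 1) * (- -μ)) = Real.exp μ * Real.exp μ ^ n := by
    rw [← Real.exp_nat_mul, ← Real.exp_add]
    congr 1; ring
  rw [e1, neg_pow μ, mul_pow]
  have : ((-1 : ℝ) ^ n) * (-1) ^ n = 1 := by rw [← mul_pow]; simp
  linear_combination (-Real.exp μ * ((((n : ℝ) + 1) ^ n / (n.factorial : ℝ)) *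
    (μ ^ n * Real.exp μ ^ n))) * this

theorem borel_small {μ : ℝ} (h0 : 0 < μ) (h1 : μ < 1 / 10) :
    HasSum (fun n : ℕ => ((n : ℝ) + 1) * borelWeight μ n) (1 / (1 - μ)) := by
  have hs := (borelT_summable h0 h1).hasSum
  have hrow := hs.prod_fiberwise (borelT_row μ)
  have hd := (Finset.HasAntidiagonal.sigmaAntidiagonalEquivProd.hasSum_iff.2 hs).sigma
    (fun m => (hasSum_fintype _))
  have hd2 : HasSum (fun m : ℕ => μ ^ m) (∑' p, borelT μ p) := by
    convert hd using 2 with m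
    rw [← borelT_diag, ← Finset.sum_coe_sort]
    rfl
  rw [hd2.unique (hasSum_geometric_of_lt_one h0.le (by linarith))] at hrow
  rw [one_div]
  convert hrow using 2 with n
  rw [borel_term]
  have h1 : Real.exp (((n : ℝ) + 1) * (-μ)) = Real.exp (-μ) * Real.exp (-μ) ^ n := by
    rw [← Real.exp_nat_mul, ← Real.exp_add]
    congr 1; ring
  rw [h1, mul_pow]
  ring

theorem borel_analytic {μ : ℝ} (h0 : 0 < μ) (h1 : μ < 1) :
    AnalyticAt ℝ (fun μ : ℝ => Real.exp (-μ) *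
      FormalMultilinearSeries.ofScalarsSum (E := ℝ)
        (fun n : ℕ => ((n : ℝ) + 1) ^ n / (n.factorial : ℝ)) (μ * Real.exp (-μ))) μ := by
  set c : ℕ → ℝ := fun n : ℕ => ((n : ℝ) + 1) ^ n / (n.factorial : ℝ) with hc
  have hr : ((Real.toNNReal (Real.exp (-1)) : NNReal) : ENNReal) ≤
      (FormalMultilinearSeries.ofScalars ℝ c).radius := by
    refine FormalMultilinearSeries.le_radius_of_bound _ (Real.exp 1) fun n => ?_
    rw [Real.coe_toNNReal _ (Real.exp_pos _).le, FormalMultilinearSeries.ofScalars_norm, Real.norm_of_nonneg (by positivity)]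
    calc c n * Real.exp (-1) ^ n ≤ (Real.exp 1 * Real.exp 1 ^ n) * Real.exp (-1) ^ n := by
          gcongr; exact borel_coef_le n
      _ = Real.exp 1 := by
          rw [mul_assoc, ← mul_pow, ← Real.exp_add]; simp
  have hx : μ * Real.exp (-μ) < Real.exp (-1) := by
    have := borel_xlt h0 h1
    rw [Real.exp_neg 1, ← one_div, lt_div_iff₀ (Real.exp_pos _)]
    linarith
  have hF := FormalMultilinearSeries.hasFPowerSeriesOnBall (FormalMultilinearSeries.ofScalars ℝ c)
    (lt_of_lt_of_le (by rw [ENNReal.coe_pos, Real.toNNReal_pos]; exact Real.exp_pos _) hr)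
  have hA : AnalyticAt ℝ (FormalMultilinearSeries.ofScalarsSum (E := ℝ) c) (μ * Real.exp (-μ)) := by
    refine hF.analyticAt_of_mem ?_
    refine Metric.eball_subset_eball hr ?_
    rw [Metric.eball_coe, Real.coe_toNNReal _ (Real.exp_pos _).le]
    rw [mem_ball_zero_iff, Real.norm_of_nonneg (by positivity)]
    exact hx
  have hi : AnalyticAt ℝ (fun μ : ℝ => μ * Real.exp (-μ)) μ := by fun_prop
  have he : AnalyticAt ℝ (fun μ : ℝ => Real.exp (-μ)) μ := by fun_prop
  exact he.mul (AnalyticAt.fun_comp (f := fun μ : ℝ => μ * Real.exp (-μ)) hA hi)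

/-- For `0 < μ < 1`, the series `Σ_{k=1}^∞ k·e^{-kμ}(kμ)^{k-1}/k!` converges with sum
`1/(1-μ)`: the Borel(μ) distribution has mean `1/(1-μ)`. -/
theorem borel_mean (μ : ℝ) (hμ0 : 0 < μ) (hμ1 : μ < 1) :
    HasSum (fun n : ℕ => ((n : ℝ) + 1) * borelWeight μ n) (1 / (1 - μ)) := by
  have key : Set.EqOn (fun μ : ℝ => Real.exp (-μ) *
      FormalMultilinearSeries.ofScalarsSum (E := ℝ)
        (fun n : ℕ => ((n : ℝ) + 1) ^ n / (n.factorial : ℝ)) (μ * Real.exp (-μ)))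
      (fun μ => 1 / (1 - μ)) (Set.Ioo 0 1) := by
    refine AnalyticOnNhd.eqOn_of_preconnected_of_eventuallyEq (𝕜 := ℝ) (z₀ := 1 / 20)
      (fun x hx => borel_analytic hx.1 hx.2) (fun x hx => ?_) isPreconnected_Ioo
      (by norm_num) ?_
    · have : 1 - x ≠ 0 := by have := hx.2; linarith
      exact analyticAt_const.div (by fun_prop) this
    · filter_upwards [Ioo_mem_nhds (show (0 : ℝ) < 1 / 20 by norm_num)
        (show (1 / 20 : ℝ) < 1 / 10 by norm_num)] with x hx
      have := (borel_small hx.1 hx.2).tsum_eq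
      simp only [borel_term, tsum_mul_left] at this
      rw [FormalMultilinearSeries.ofScalars_sum_eq]
      simpa using this
  have hk := key ⟨hμ0, hμ1⟩
  have hs := (borel_summable (x := μ * Real.exp (-μ)) (by positivity)
    (borel_xlt hμ0 hμ1)).hasSum.mul_left (Real.exp (-μ))
  simp only [FormalMultilinearSeries.ofScalars_sum_eq, smul_eq_mul] at hk
  rw [hk] at hs
  simpa only [borel_term] using hs
end

section
/- Let 0 < μ < 1 and θ₀(μ) = μ − 1 − log μ. Then Σ_{k=1}^∞ e^{θ₀(μ)k}·e^{−kμ}(kμ)^{k−1}/k! = 1/μ, i.e. the exponential moment of the Borel(μ) distribution at the boundary point θ₀(μ) of its effective domain is finite and equals 1/μ. -/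
noncomputable def bc (n : ℕ) : ℝ := ((n : ℝ) + 1) ^ n / (Nat.factorial (n + 1) : ℝ)

lemma bc_nonneg (n : ℕ) : 0 ≤ bc n := by unfold bc; positivity

lemma bc_le (n : ℕ) : bc n ≤ Real.exp ((n : ℝ) + 1) := by
  have h := Real.pow_div_factorial_le_exp ((n : ℝ) + 1) (by positivity) n
  refine le_trans ?_ h
  unfold bc
  gcongr
  omega

lemma bc_coeff (m : ℕ) (t : ℝ) : ∑ p ∈ Finset.HasAntidiagonal.antidiagonal m,
    bc p.1 * t ^ p.1 * ((-((p.1 : ℝ) + 1) * t) ^ p.2 / (Nat.factorial p.2 : ℝ))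
      = if m = 0 then 1 else 0 := by
  rcases Nat.eq_zero_or_pos m with rfl | hm
  · simp [bc]
  rw [if_neg hm.ne']
  have h := congrFun (fwdDiff_iter_pow_eq_zero_of_lt (R := ℝ) (Nat.lt_succ_self m)) 0
  rw [fwdDiff_iter_eq_sum_shift, Finset.sum_range_succ'] at h
  simp only [zero_add, nsmul_eq_mul, mul_one, zsmul_eq_mul, Nat.cast_zero, Pi.zero_apply, zero_mul,
    zero_pow hm.ne', mul_zero, add_zero, zero_smul] at h
  rw [Finset.Nat.sum_antidiagonal_eq_sum_range_succ_mk]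
  have h2 : ∀ k ∈ Finset.range (m + 1),
      bc k * t ^ k * ((-((k : ℝ) + 1) * t) ^ (m - k) / (Nat.factorial (m - k) : ℝ))
      = (t ^ m / (Nat.factorial (m + 1) : ℝ)) *
       (((((-1 : ℤ) ^ (m.succ - (k + 1)) * (m.succ.choose (k + 1) : ℕ) : ℤ)) : ℝ) * ((k + 1 : ℕ) : ℝ) ^ m) := by
    intro k hk
    have hk' : k ≤ m := by simpa [Nat.lt_succ_iff] using hk
    obtain ⟨j, rfl⟩ := Nat.exists_eq_add_of_le hk'
    have e1 : k + j - k = j := by omega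
    have e2 : (k + j).succ - (k + 1) = j := by omega
    have hc := Nat.add_choose_mul_factorial_mul_factorial j (k + 1)
    have e3 : j + (k + 1) = k + j + 1 := by omega
    rw [e3] at hc
    have hc' : (((k + j + 1).choose (k + 1) : ℕ) : ℝ) * (Nat.factorial j : ℝ) * (Nat.factorial (k + 1) : ℝ) = (Nat.factorial (k + j + 1) : ℝ) := by
      exact_mod_cast hc
    have f1 : (Nat.factorial j : ℝ) ≠ 0 := by positivity
    have f2 : (Nat.factorial (k + 1) : ℝ) ≠ 0 := by positivity
    have f3 : (((k + j + 1).choose (k + 1) : ℕ) : ℝ) ≠ 0 := by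
      have := Nat.choose_pos (n := k + j + 1) (k := k + 1) (by omega)
      positivity
    rw [e1, e2, ← hc', bc, Nat.succ_eq_add_one, neg_mul, neg_pow, mul_pow]
    push_cast
    field_simp
    ring
  rw [Finset.sum_congr rfl h2, ← Finset.mul_sum]
  rw [h, mul_zero]

lemma bc_hasSum_small (t : ℝ) (ht : |t| < 1 / 20) :
    HasSum (fun n : ℕ => bc n * t ^ n * Real.exp (-((n : ℝ) + 1) * t)) 1 := by
  set f : ℕ × ℕ → ℝ := fun p =>
    bc p.1 * t ^ p.1 * ((-((p.1 : ℝ) + 1) * t) ^ p.2 / (Nat.factorial p.2 : ℝ)) with hf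
  have hexp : ∀ x : ℝ, HasSum (fun j : ℕ => x ^ j / (Nat.factorial j : ℝ)) (Real.exp x) := by
    intro x
    rw [Real.exp_eq_exp_ℝ]
    exact NormedSpace.expSeries_div_hasSum_exp x
  have hfib : ∀ n : ℕ, HasSum (fun j => f (n, j)) (bc n * t ^ n * Real.exp (-((n : ℝ) + 1) * t)) :=
    fun n => (hexp _).mul_left _
  have hnf : ∀ n j : ℕ, ‖f (n, j)‖ = bc n * |t| ^ n * ((((n : ℝ) + 1) * |t|) ^ j / (Nat.factorial j : ℝ)) := by
    intro n j
    have h1 : |(n : ℝ) + 1| = n + 1 := abs_of_nonneg (by positivity)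
    simp only [hf, Real.norm_eq_abs, abs_mul, abs_div, abs_pow, abs_neg, h1, Nat.abs_cast,
      abs_of_nonneg (bc_nonneg n)]
  have hfibn : ∀ n : ℕ, HasSum (fun j => ‖f (n, j)‖) (bc n * |t| ^ n * Real.exp (((n : ℝ) + 1) * |t|)) := by
    intro n
    simp only [hnf]
    exact (hexp _).mul_left _
  have he2 : Real.exp 2 < 10 := by
    have := Real.exp_one_lt_d9
    have h2 : Real.exp 2 = Real.exp 1 * Real.exp 1 := by rw [← Real.exp_add]; norm_num
    have := Real.exp_pos 1
    rw [h2]; nlinarith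
  have hsum : Summable f := by
    apply Summable.of_norm
    rw [summable_prod_of_nonneg (fun _ => norm_nonneg _)]
    refine ⟨fun n => (hfibn n).summable, ?_⟩
    simp only [(hfibn _).tsum_eq]
    refine Summable.of_nonneg_of_le (fun n => ?_) (fun n => ?_)
      ((summable_geometric_of_lt_one (r := 1 / 2) (by norm_num) (by norm_num)).mul_left 10)
    · have := bc_nonneg n
      positivity
    · calc bc n * |t| ^ n * Real.exp (((n : ℝ) + 1) * |t|)
          ≤ Real.exp ((n : ℝ) + 1) * (1 / 20) ^ n * Real.exp (((n : ℝ) + 1) * 1) := by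
            have := bc_nonneg n
            have h3 := bc_le n
            have : |t| ≤ 1 := by linarith
            gcongr
        _ = Real.exp 2 * (Real.exp 2 * (1 / 20)) ^ n := by
            rw [mul_pow, ← Real.exp_nat_mul, mul_right_comm, ← Real.exp_add, ← mul_assoc, ← Real.exp_add]
            congr 2
            ring
        _ ≤ 10 * (1 / 2) ^ n := by
            have : Real.exp 2 * (1 / 20) ≤ 1 / 2 := by linarith
            gcongr
  have h1 := hsum.hasSum.prod_fiberwise hfib
  have h2 : HasSum (fun m : ℕ => if m = 0 then (1 : ℝ) else 0) (∑' p, f p) := by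
    have h3 := (Finset.HasAntidiagonal.sigmaAntidiagonalEquivProd (A := ℕ)).hasSum_iff.mpr hsum.hasSum
    have h4 := h3.sigma (g := fun m : ℕ => if m = 0 then (1 : ℝ) else 0) (fun m => by
      rw [← bc_coeff m t, ← Finset.sum_coe_sort (Finset.HasAntidiagonal.antidiagonal m)]
      exact hasSum_fintype _)
    exact h4
  have h5 : HasSum (fun m : ℕ => if m = 0 then (1 : ℝ) else 0) 1 := hasSum_ite_eq 0 1
  rwa [h2.unique h5] at h1

lemma bc_radius : ENNReal.ofReal (Real.exp (-1)) ≤ (FormalMultilinearSeries.ofScalars ℝ bc).radius := by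
  have := (FormalMultilinearSeries.ofScalars ℝ bc).le_radius_of_bound (r := (Real.exp (-1)).toNNReal)
    (Real.exp 1) (fun n => by
      rw [FormalMultilinearSeries.ofScalars_norm, Real.norm_of_nonneg (bc_nonneg n),
        Real.coe_toNNReal _ (Real.exp_pos _).le, ← Real.exp_nat_mul]
      refine (mul_le_mul_of_nonneg_right (bc_le n) (Real.exp_pos _).le).trans ?_
      rw [← Real.exp_add]
      gcongr
      linarith)
  exact this

lemma bc_series : HasFPowerSeriesOnBall (FormalMultilinearSeries.ofScalars ℝ bc).sum
    (FormalMultilinearSeries.ofScalars ℝ bc) 0 (ENNReal.ofReal (Real.exp (-1))) :=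
  ((FormalMultilinearSeries.ofScalars ℝ bc).hasFPowerSeriesOnBall
    (lt_of_lt_of_le (by simp [Real.exp_pos]) bc_radius)).mono (by simp [Real.exp_pos]) bc_radius

lemma bc_mem (t : ℝ) (ht : t ∈ Set.Ioo (-1 / 20 : ℝ) 1) :
    t * Real.exp (-t) ∈ Metric.eball (0 : ℝ) (ENNReal.ofReal (Real.exp (-1))) := by
  rw [Metric.eball_ofReal, mem_ball_zero_iff, Real.norm_eq_abs, abs_mul, Real.abs_exp]
  obtain ⟨h1, h2⟩ := ht
  rcases le_or_gt 0 t with h | h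
  · rw [abs_of_nonneg h]
    have := Real.add_one_lt_exp (x := t - 1) (by linarith)
    calc t * Real.exp (-t) < Real.exp (t - 1) * Real.exp (-t) := by
          gcongr
          linarith
      _ = Real.exp (-1) := by rw [← Real.exp_add]; ring_nf
  · rw [abs_of_neg h]
    have he := Real.exp_one_lt_d9
    have h3 : Real.exp (-t) ≤ Real.exp 1 := by gcongr; linarith
    have h4 : Real.exp (-1) * Real.exp 1 = 1 := by rw [← Real.exp_add]; simp
    have := Real.exp_pos (-1)
    have := Real.exp_pos (-t)
    nlinarith

lemma bc_hasSum (t : ℝ) (ht : t ∈ Set.Ioo (-1 / 20 : ℝ) 1) :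
    HasSum (fun n => bc n * (t * Real.exp (-t)) ^ n) (Real.exp t) := by
  have hs : ∀ t ∈ Set.Ioo (-1 / 20 : ℝ) 1, HasSum (fun n => bc n * (t * Real.exp (-t)) ^ n)
      ((FormalMultilinearSeries.ofScalars ℝ bc).sum (t * Real.exp (-t))) := by
    intro t ht
    have := bc_series.hasSum (bc_mem t ht)
    simpa [FormalMultilinearSeries.ofScalars_apply_eq, mul_comm (bc _)] using this
  have key : Set.EqOn (fun t => (FormalMultilinearSeries.ofScalars ℝ bc).sum (t * Real.exp (-t)))
      Real.exp (Set.Ioo (-1 / 20 : ℝ) 1) := by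
    refine AnalyticOnNhd.eqOn_of_preconnected_of_eventuallyEq (𝕜 := ℝ) (z₀ := 0) ?_ ?_
      isPreconnected_Ioo (by norm_num) ?_
    · intro t ht
      have ha := bc_series.analyticAt_of_mem (bc_mem t ht)
      have hb : AnalyticAt ℝ (fun t : ℝ => t * Real.exp (-t)) t := by fun_prop
      exact AnalyticAt.comp (f := fun t : ℝ => t * Real.exp (-t)) ha hb
    · intro t _
      fun_prop
    · have : Set.Ioo (-1 / 20 : ℝ) (1 / 20) ∈ nhds (0 : ℝ) := Ioo_mem_nhds (by norm_num) (by norm_num)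
      filter_upwards [this] with t ht
      have h1 := bc_hasSum_small t (abs_lt.mpr ⟨by linarith [ht.1], ht.2⟩)
      have h2 := h1.mul_left (Real.exp t)
      rw [mul_one] at h2
      refine (hs t ⟨ht.1, by linarith [ht.2]⟩).unique ?_
      refine Eq.mpr (congrArg (fun F => HasSum F _) (funext fun n => ?_)) h2
      have e : Real.exp (-((n : ℝ) + 1) * t) = Real.exp (-t) ^ n * Real.exp (-t) := by
        rw [← Real.exp_nat_mul, ← Real.exp_add]; ring_nf
      have e2 : Real.exp t * Real.exp (-t) = 1 := by rw [← Real.exp_add]; simp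
      rw [e, mul_pow]
      linear_combination (-(bc n * t ^ n * Real.exp (-t) ^ n)) * e2
  have := hs t ht
  have hk := key ht
  simp only at hk
  rwa [hk] at this

lemma bc_boundary : HasSum (fun n => bc n * Real.exp (-1) ^ n) (Real.exp 1) := by
  have hnn : ∀ n, 0 ≤ bc n * Real.exp (-1) ^ n := fun n => by
    have := bc_nonneg n
    positivity
  have hlim : (nhdsWithin (1 : ℝ) (Set.Iio 1)).NeBot := inferInstance
  have hev : ∀ᶠ t in nhdsWithin (1 : ℝ) (Set.Iio 1), t ∈ Set.Ioo (0 : ℝ) 1 :=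
    Ioo_mem_nhdsLT (by norm_num)
  have hle : ∀ s : Finset ℕ, ∑ n ∈ s, bc n * Real.exp (-1) ^ n ≤ Real.exp 1 := by
    intro s
    have hc : Continuous (fun t : ℝ => ∑ n ∈ s, bc n * (t * Real.exp (-t)) ^ n) := by fun_prop
    have hT := (hc.tendsto 1).mono_left (nhdsWithin_le_nhds (s := Set.Iio 1))
    have := le_of_tendsto hT (b := Real.exp 1) (by
      filter_upwards [hev] with t ht
      have h1 := bc_hasSum t ⟨by linarith [ht.1], ht.2⟩
      refine (sum_le_hasSum s (fun n _ => ?_) h1).trans (Real.exp_le_exp.mpr ht.2.le)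
      have := bc_nonneg n
      have := ht.1
      positivity)
    simpa using this
  have hS : Summable (fun n => bc n * Real.exp (-1) ^ n) := summable_of_sum_le hnn hle
  have h1 : ∑' n, bc n * Real.exp (-1) ^ n ≤ Real.exp 1 := hS.tsum_le_of_sum_le hle
  have h2 : Real.exp 1 ≤ ∑' n, bc n * Real.exp (-1) ^ n := by
    have hT := (Real.continuous_exp.tendsto 1).mono_left (nhdsWithin_le_nhds (s := Set.Iio 1))
    refine le_of_tendsto hT ?_
    filter_upwards [hev] with t ht
    have ht' : t ∈ Set.Ioo (-1 / 20 : ℝ) 1 := ⟨by linarith [ht.1], ht.2⟩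
    refine hasSum_le (fun n => ?_) (bc_hasSum t ht') hS.hasSum
    have hm := bc_mem t ht'
    rw [Metric.eball_ofReal, mem_ball_zero_iff, Real.norm_eq_abs] at hm
    have := bc_nonneg n
    have := ht.1
    have := (le_abs_self _).trans hm.le
    gcongr
  rw [← le_antisymm h1 h2]
  exact hS.hasSum


/-- For `0 < μ < 1` and `θ₀(μ) = μ - 1 - log μ`, we have
`Σ_{k=1}^∞ e^{θ₀(μ)k} p_μ(k) = 1/μ`: the exponential moment of Borel(μ) at the
boundary point of its effective domain is finite and equals `1/μ`. -/
theorem borel_expMoment_at_boundary (μ : ℝ) (hμ0 : 0 < μ) (hμ1 : μ < 1) :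
    HasSum (fun n : ℕ => Real.exp ((μ - 1 - Real.log μ) * ((n : ℝ) + 1)) * borelWeight μ n)
      (1 / μ) := by
  have h := bc_boundary.mul_left (Real.exp (-1) / μ)
  have e : Real.exp (-1) / μ * Real.exp 1 = 1 / μ := by
    rw [div_mul_eq_mul_div, ← Real.exp_add]; simp
  rw [e] at h
  refine Eq.mpr (congrArg (fun F => HasSum F _) (funext fun n => ?_)) h
  have e1 : Real.exp ((μ - 1 - Real.log μ) * ((n : ℝ) + 1)) * Real.exp (-((n : ℝ) + 1) * μ)
      = Real.exp (-1) * Real.exp (-1) ^ n / μ ^ (n + 1) := by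
    have e2 : μ ^ (n + 1) = Real.exp (((n + 1 : ℕ) : ℝ) * Real.log μ) := by
      rw [Real.exp_nat_mul, Real.exp_log hμ0]
    rw [e2, ← Real.exp_nat_mul, ← Real.exp_add, ← Real.exp_add, ← Real.exp_sub]
    congr 1
    push_cast
    ring
  unfold borelWeight bc
  rw [mul_div_assoc, ← mul_assoc, e1, mul_pow]
  field_simp
  ring
end

section
/- Let 0 < μ < 1 and θ₀(μ) = μ − 1 − log μ. Then the sequence k ↦ k·e^{θ₀(μ)k}·e^{−kμ}(kμ)^{k−1}/k! (k ≥ 1) is NOT summable; equivalently E[S e^{θ₀(μ)S}] = ∞ for S Borel(μ)-distributed. (This is the essential smoothness of θ ↦ E[e^{θS}]; the proof uses that e^{−k}k^k/k! ∼ 1/√(2πk) by Stirling's formula.) -/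
lemma factorial_le_aux (n : ℕ) : (Nat.factorial (n + 1) : ℝ) ≤
    Real.exp 1 * ((n : ℝ) + 1) * (((n : ℝ) + 1) / Real.exp 1) ^ (n + 1) := by
  have h := Stirling.stirlingSeq'_antitone (Nat.zero_le n)
  simp only [Function.comp, Nat.succ_eq_add_one, zero_add] at h
  rw [Stirling.stirlingSeq_one, Stirling.stirlingSeq] at h
  push_cast at h
  rw [div_le_iff₀ (by positivity)] at h
  refine h.trans ?_
  rw [Real.sqrt_mul (by norm_num)]
  have h2 : (0 : ℝ) < √2 := by positivity
  have hs : √((n : ℝ) + 1) ≤ (n : ℝ) + 1 := by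
    rw [Real.sqrt_le_left (by positivity)]
    have : (0 : ℝ) ≤ n := by positivity
    nlinarith
  calc Real.exp 1 / √2 * (√2 * √((n : ℝ) + 1) * (((n : ℝ) + 1) / Real.exp 1) ^ (n + 1))
      = Real.exp 1 * √((n : ℝ) + 1) * (((n : ℝ) + 1) / Real.exp 1) ^ (n + 1) := by
        field_simp
    _ ≤ _ := by gcongr

lemma term_eq_aux (μ : ℝ) (hμ0 : 0 < μ) (n : ℕ) :
    ((n : ℝ) + 1) * Real.exp ((μ - 1 - Real.log μ) * ((n : ℝ) + 1)) * borelWeight μ n =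
      (((n : ℝ) + 1) / Real.exp 1) ^ (n + 1) / (Nat.factorial (n + 1) : ℝ) / μ := by
  have e1 : Real.exp ((μ - 1 - Real.log μ) * ((n : ℝ) + 1)) * Real.exp (-((n : ℝ) + 1) * μ)
      = (Real.exp 1 * μ)⁻¹ ^ (n + 1) := by
    rw [← Real.exp_add]
    have : Real.exp 1 * μ = Real.exp (1 + Real.log μ) := by
      rw [Real.exp_add, Real.exp_log hμ0]
    rw [this, ← Real.exp_neg, ← Real.exp_nat_mul]
    congr 1
    push_cast
    ring
  unfold borelWeight
  calc _ = ((n : ℝ) + 1) * (Real.exp ((μ - 1 - Real.log μ) * ((n : ℝ) + 1)) *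
        Real.exp (-((n : ℝ) + 1) * μ)) * (((n : ℝ) + 1) * μ) ^ n
          / (Nat.factorial (n + 1) : ℝ) := by ring
    _ = _ := by
      rw [e1, inv_pow, mul_pow, mul_pow, div_pow]
      have := Nat.factorial_ne_zero (n + 1)
      field_simp
      ring

/-- For `0 < μ < 1` and `θ₀(μ) = μ - 1 - log μ`, the sequence
`k ↦ k e^{θ₀(μ)k} p_μ(k)` (for `k ≥ 1`) is not summable, i.e.
`E[S e^{θ₀(μ)S}] = ∞` for `S` Borel(μ)-distributed (essential smoothness). -/
theorem borel_S_expMoment_at_boundary_not_summable (μ : ℝ) (hμ0 : 0 < μ) (hμ1 : μ < 1) :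
    ¬ Summable (fun n : ℕ =>
      ((n : ℝ) + 1) * Real.exp ((μ - 1 - Real.log μ) * ((n : ℝ) + 1)) * borelWeight μ n) := by
  intro hs
  simp only [term_eq_aux μ hμ0] at hs
  have hs2 : Summable (fun n : ℕ => 1 / ((n + 1 : ℕ) : ℝ)) := by
    refine Summable.of_nonneg_of_le (fun n => by positivity) (fun n => ?_)
      (hs.mul_left (Real.exp 1 * μ))
    have h := factorial_le_aux n
    have hf : (0 : ℝ) < (Nat.factorial (n + 1) : ℝ) := by positivity
    have : Real.exp 1 * μ * ((((n : ℝ) + 1) / Real.exp 1) ^ (n + 1) /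
        (Nat.factorial (n + 1) : ℝ) / μ) = Real.exp 1 * (((n : ℝ) + 1) / Real.exp 1) ^ (n + 1) /
        (Nat.factorial (n + 1) : ℝ) := by
      generalize (((n : ℝ) + 1) / Real.exp 1) ^ (n + 1) = x
      field_simp
    rw [this, div_le_div_iff₀ (by positivity) hf]
    push_cast
    push_cast at h
    linarith
  exact Real.not_summable_one_div_natCast ((summable_nat_add_iff 1).1 hs2)
end

section
/- Let 0 < μ < 1, θ₀(μ) = μ − 1 − log μ, φ_μ(θ) = Σ_{k=1}^∞ e^{θk}·e^{−kμ}(kμ)^{k−1}/k! and ψ_μ(θ) = Σ_{k=1}^∞ k·e^{θk}·e^{−kμ}(kμ)^{k−1}/k!. Then for every θ < θ₀(μ): μ·φ_μ(θ) < 1 and ψ_μ(θ) = φ_μ(θ)/(1 − μ·φ_μ(θ)). -/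
/-- `φ_μ(θ) = Σ_{k=1}^∞ e^{θk} p_μ(k)`. -/
noncomputable def borelPhi (μ θ : ℝ) : ℝ :=
  ∑' n : ℕ, Real.exp (θ * ((n : ℝ) + 1)) * borelWeight μ n

/-- `ψ_μ(θ) = Σ_{k=1}^∞ k e^{θk} p_μ(k)`. -/
noncomputable def borelPsi (μ θ : ℝ) : ℝ :=
  ∑' n : ℕ, ((n : ℝ) + 1) * Real.exp (θ * ((n : ℝ) + 1)) * borelWeight μ n

open Finset in
lemma abel_zero (n : ℕ) :
    ∑ j ∈ range (n + 2), ((n + 2).choose j : ℝ) * ((n : ℝ) + 2 - j) ^ (n + 1 - j)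
      * (0 - ((n : ℝ) + 2 - j)) ^ j = 0 := by
  have h := congrFun (fwdDiff_iter_pow_eq_zero_of_lt (R := ℝ) (Nat.lt_succ_self (n + 1)))
    (-((n : ℝ) + 2))
  rw [fwdDiff_iter_eq_sum_shift, sum_range_succ] at h
  have e : (-((n : ℝ) + 2) + ((n + 1).succ) • (1 : ℝ)) = 0 := by
    simp; ring
  rw [e] at h
  simp only [zero_pow (Nat.succ_ne_zero n), smul_zero, add_zero, Pi.zero_apply] at h
  rw [← neg_eq_zero]
  refine Eq.trans ?_ h
  rw [← sum_neg_distrib]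
  refine sum_congr rfl fun j hj => ?_
  obtain ⟨m, hm⟩ : ∃ m, n + 1 = j + m := ⟨n + 1 - j, by have := mem_range.1 hj; omega⟩
  have h1 : n + 1 - j = m := by omega
  have h2 : (n + 1).succ - j = m + 1 := by omega
  have h3 : (n : ℝ) + 2 - j = m + 1 := by
    have : (n : ℝ) + 1 = j + m := by exact_mod_cast hm
    linarith
  have h4 : (-((n : ℝ) + 2) + j • (1 : ℝ)) = -(m + 1 : ℝ) := by
    rw [nsmul_one]; linarith
  rw [h1, h2, h3, h4, hm, zero_sub, neg_pow, neg_pow ((m : ℝ) + 1) (j + m), zsmul_eq_mul,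
    show n + 2 = n + 1 + 1 from rfl, Nat.succ_eq_add_one, hm]
  push_cast
  have : ((-1 : ℝ)) ^ m * (-1) ^ m = 1 := by rw [← mul_pow]; simp
  rw [pow_add, pow_add, pow_succ]
  linear_combination (((j + m + 1).choose j : ℝ) * (m + 1 : ℝ) ^ m * (-1) ^ j * (m + 1) ^ j) * this

open Finset in
lemma abel_aux (n : ℕ) : ∀ y : ℝ,
    ∑ j ∈ range (n + 1), ((n + 1).choose j : ℝ) * ((n : ℝ) + 1 - j) ^ (n - j)
      * (y - ((n : ℝ) + 1 - j)) ^ j = (n + 1) * y ^ n := by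
  induction n with
  | zero => intro y; simp
  | succ n ih =>
    intro y
    let F : ℝ → ℝ := fun y => ∑ j ∈ range (n + 2), ((n + 2).choose j : ℝ) *
      ((n : ℝ) + 2 - j) ^ (n + 1 - j) * (y - ((n : ℝ) + 2 - j)) ^ j - (n + 2) * y ^ (n + 1)
    have hF : ∀ y, HasDerivAt F 0 y := by
      intro y
      have h1 : HasDerivAt F (∑ j ∈ range (n + 2), ((n + 2).choose j : ℝ) *
          ((n : ℝ) + 2 - j) ^ (n + 1 - j) * (j * (y - ((n : ℝ) + 2 - j)) ^ (j - 1) * 1)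
          - (n + 2) * ((n + 1 : ℕ) * y ^ n * 1)) y := by
        refine HasDerivAt.sub (HasDerivAt.fun_sum fun j _ => ?_) ?_
        · exact (((hasDerivAt_id y).sub_const _).fun_pow j).const_mul _
        · exact ((hasDerivAt_id y).fun_pow (n + 1)).const_mul _
      convert h1 using 1
      rw [sum_range_succ']
      have := ih y
      symm
      simp only [Nat.cast_zero, zero_mul, mul_zero, add_zero, mul_one]
      push_cast
      rw [← this, sub_eq_zero, mul_sum]
      refine sum_congr rfl fun j hj => ?_
      have hch : ((n : ℝ) + 2) * ((n + 1).choose j : ℝ) =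
          ((n + 2).choose (j + 1) : ℝ) * (j + 1) := by
        have := Nat.add_one_mul_choose_eq (n + 1) j
        have h2 : (((n + 1 + 1) * (n + 1).choose j : ℕ) : ℝ) =
          ((n + 1 + 1).choose (j + 1) * (j + 1) : ℕ) := by rw [this]
        push_cast at h2
        linear_combination h2
      rw [show (n : ℝ) + 2 - (j + 1) = n + 1 - j by ring]
      linear_combination (-((n : ℝ) + 1 - j) ^ (n - j) * (y - (n + 1 - j)) ^ j) * hch
    have hc := is_const_of_deriv_eq_zero (fun y => (hF y).differentiableAt)
      (fun y => (hF y).deriv) y 0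
    have h0 : F 0 = 0 := by
      simp only [F]; rw [abel_zero]; simp
    rw [h0] at hc
    have := sub_eq_zero.1 hc
    push_cast
    rw [show (n : ℝ) + 1 + 1 = n + 2 by ring]
    exact this

open Finset in
lemma abel_main (n : ℕ) :
    ∑ j ∈ range (n + 1), ((n + 1).choose j : ℝ) * (((n - j : ℕ) : ℝ) + 1) ^ (n - j)
      * (j : ℝ) ^ j = ((n : ℝ) + 1) ^ (n + 1) := by
  have := abel_aux n (n + 1)
  rw [pow_succ', ← this]
  refine sum_congr rfl fun j hj => ?_
  have := mem_range.1 hj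
  rw [Nat.cast_sub (by omega)]
  congr 2 <;> ring

open Finset in
lemma tree_main (x : ℝ) (hx : 0 < x) (hx1 : x < Real.exp (-1)) :
    let t : ℕ → ℝ := fun n => ((n : ℝ) + 1) ^ n * x ^ (n + 1) / (n + 1).factorial
    let d : ℕ → ℝ := fun n => (n : ℝ) ^ n * x ^ n / n.factorial
    (1 + ∑' n, d (n + 1)) * (∑' n, t n) = ∑' n, d (n + 1) ∧
     0 < ∑' n, t n ∧ 0 < ∑' n, d (n + 1) := by
  intro t d
  have hd0 : ∀ n, 0 ≤ d n := fun n => by positivity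
  have ht0 : ∀ n, 0 < t n := fun n => by positivity
  have hd : Summable d := by
    have hr : Real.exp 1 * x < 1 := by
      calc _ < Real.exp 1 * Real.exp (-1) := by gcongr
        _ = 1 := by rw [← Real.exp_add]; simp
    refine Summable.of_nonneg_of_le hd0 (fun n => ?_)
      (summable_geometric_of_lt_one (by positivity) hr)
    have := Real.pow_div_factorial_le_exp (x := n) (by positivity) n
    calc d n = (n : ℝ) ^ n / n.factorial * x ^ n := by simp only [d]; ring
      _ ≤ Real.exp n * x ^ n := by gcongr
      _ = _ := by rw [mul_pow, ← Real.exp_nat_mul]; simp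
  have hd' : Summable (fun n => d (n + 1)) := (summable_nat_add_iff 1).2 hd
  have htd : ∀ n, d (n + 1) = (n + 1) * t n := fun n => by
    simp only [d, t]; push_cast; ring
  have ht : Summable t := by
    refine Summable.of_nonneg_of_le (fun n => (ht0 n).le) (fun n => ?_) hd'
    rw [htd]
    have := ht0 n
    have : 0 ≤ (n : ℝ) * t n := by positivity
    linarith
  have hc : ∀ n, ∑ j ∈ range (n + 1), d j * t (n - j) = d (n + 1) := by
    intro n
    have := abel_main n
    simp only [d]
    push_cast
    rw [← this, sum_mul, sum_div]
    refine sum_congr rfl fun j hj => ?_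
    have hj := mem_range.1 hj
    rw [Nat.cast_choose ℝ (by omega : j ≤ n + 1)]
    simp only [t]
    rw [show n + 1 - j = n - j + 1 by omega]
    have e : x ^ (n + 1) = x ^ j * x ^ (n - j + 1) := by rw [← pow_add]; congr 1; omega
    rw [e]
    field_simp
  refine ⟨?_, ht.tsum_pos (fun n => (ht0 n).le) 0 (ht0 0), hd'.tsum_pos (fun n => hd0 _) 0 ?_⟩
  · have h0 : d 0 = 1 := by simp [d]
    rw [← h0, ← hd.tsum_eq_zero_add, tsum_mul_tsum_eq_tsum_sum_range_of_summable_norm hd.norm ht.norm]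
    exact tsum_congr hc
  · simp [d, hx]

/-- For `0 < μ < 1` and `θ < θ₀(μ) = μ - 1 - log μ`: `μ φ_μ(θ) < 1` and
`ψ_μ(θ) = φ_μ(θ)/(1 - μ φ_μ(θ))`. -/
theorem borelPsi_eq (μ θ : ℝ) (hμ0 : 0 < μ) (hμ1 : μ < 1)
    (hθ : θ < μ - 1 - Real.log μ) :
    μ * borelPhi μ θ < 1 ∧
      borelPsi μ θ = borelPhi μ θ / (1 - μ * borelPhi μ θ) := by
  have hx : 0 < μ * Real.exp (θ - μ) := by positivity
  have hx1 : μ * Real.exp (θ - μ) < Real.exp (-1) := by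
    calc _ = Real.exp (Real.log μ + (θ - μ)) := by rw [Real.exp_add, Real.exp_log hμ0]
      _ < _ := Real.exp_lt_exp.2 (by linarith)
  obtain ⟨h1, h2, h3⟩ := tree_main _ hx hx1
  have key : ∀ n : ℕ, μ * (Real.exp (θ * ((n : ℝ) + 1)) * borelWeight μ n) =
      ((n : ℝ) + 1) ^ n * (μ * Real.exp (θ - μ)) ^ (n + 1) / (n + 1).factorial := by
    intro n
    have : Real.exp (θ - μ) ^ (n + 1) =
        Real.exp (θ * ((n : ℝ) + 1)) * Real.exp (-((n : ℝ) + 1) * μ) := by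
      rw [← Real.exp_nat_mul, ← Real.exp_add]; congr 1; push_cast; ring
    rw [mul_pow, this, borelWeight, mul_pow]
    ring
  have e1 : μ * borelPhi μ θ = ∑' n : ℕ,
      ((n : ℝ) + 1) ^ n * (μ * Real.exp (θ - μ)) ^ (n + 1) / (n + 1).factorial := by
    rw [borelPhi, ← tsum_mul_left]
    exact tsum_congr key
  have e2 : μ * borelPsi μ θ = ∑' n : ℕ,
      ((n + 1 : ℕ) : ℝ) ^ (n + 1) * (μ * Real.exp (θ - μ)) ^ (n + 1) / (n + 1).factorial := by
    rw [borelPsi, ← tsum_mul_left]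
    refine tsum_congr fun n => ?_
    have := key n
    push_cast
    linear_combination ((n : ℝ) + 1) * this
  simp only [← e1, ← e2] at h1 h2 h3
  have h4 : μ * borelPhi μ θ < 1 := by
    by_contra! h
    nlinarith
  refine ⟨h4, ?_⟩
  rw [eq_div_iff (by linarith)]
  apply mul_left_cancel₀ hμ0.ne'
  linear_combination -h1
end

section
/- Let 0 < μ < 1, θ₀(μ) = μ − 1 − log μ, ψ_μ(θ) = Σ_{k=1}^∞ k·e^{θk}·e^{−kμ}(kμ)^{k−1}/k!, and let ν > 0 and x > 0. Then there exists a unique θ_x ∈ (−∞, θ₀(μ)) such that ψ_μ(θ_x) = x/ν. -/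
open Filter Topology in
theorem aux_solution (a : ℕ → ℝ) (ha0 : ∀ n, 0 < a n) (ha1 : ∀ n, a n ≤ 1)
    (hns : ¬ Summable a) (y : ℝ) (hy : 0 < y) :
    ∃! s : ℝ, s < 0 ∧ ∑' n : ℕ, a n * Real.exp (s * ((n : ℝ) + 1)) = y := by
  have hsum : ∀ s : ℝ, s < 0 → Summable (fun n : ℕ => a n * Real.exp (s * ((n : ℝ) + 1))) := by
    intro s hs
    have h1 : Summable (fun n : ℕ => Real.exp s * Real.exp s ^ n) :=
      (summable_geometric_of_lt_one (Real.exp_pos s).le (by simpa using hs)).mul_left _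
    refine Summable.of_nonneg_of_le (fun n => mul_nonneg (ha0 n).le (Real.exp_pos _).le) ?_ h1
    intro n
    have : Real.exp (s * ((n : ℝ) + 1)) = Real.exp s * Real.exp s ^ n := by
      rw [← Real.exp_nat_mul, ← Real.exp_add]; congr 1; ring
    rw [← this]
    exact mul_le_of_le_one_left (Real.exp_pos _).le (ha1 n)
  set G : ℝ → ℝ := fun s => ∑' n : ℕ, a n * Real.exp (s * ((n : ℝ) + 1)) with hG
  have hmono : ∀ s t : ℝ, s < t → t < 0 → G s < G t := by
    intro s t hst ht
    have key : ∀ n : ℕ, a n * Real.exp (s * ((n : ℝ) + 1)) < a n * Real.exp (t * ((n : ℝ) + 1)) := by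
      intro n
      apply mul_lt_mul_of_pos_left _ (ha0 n)
      apply Real.exp_lt_exp.2
      exact mul_lt_mul_of_pos_right hst (by positivity)
    exact Summable.tsum_lt_tsum (fun n => (key n).le) (key 0) (hsum s (hst.trans ht)) (hsum t ht)
  have hcont : ∀ t : ℝ, t < 0 → ContinuousOn G (Set.Iic t) := by
    intro t ht
    refine continuousOn_tsum (u := fun n : ℕ => a n * Real.exp (t * ((n : ℝ) + 1)))
      (fun n => by fun_prop) (hsum t ht) ?_
    intro n s hs
    rw [Real.norm_of_nonneg (mul_nonneg (ha0 n).le (Real.exp_pos _).le)]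
    apply mul_le_mul_of_nonneg_left _ (ha0 n).le
    apply Real.exp_le_exp.2
    exact mul_le_mul_of_nonneg_right hs (by positivity)
  -- large values
  obtain ⟨t, ht0, hty⟩ : ∃ t : ℝ, t < 0 ∧ y ≤ G t := by
    have hdiv : Tendsto (fun n => ∑ i ∈ Finset.range n, a i) atTop atTop :=
      (not_summable_iff_tendsto_nat_atTop_of_nonneg (fun n => (ha0 n).le)).1 hns
    obtain ⟨N, hN⟩ := (hdiv.eventually_gt_atTop y).exists
    have hc : Continuous (fun s : ℝ => ∑ i ∈ Finset.range N, a i * Real.exp (s * ((i : ℝ) + 1))) := by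
      fun_prop
    have h0 : y < (fun s : ℝ => ∑ i ∈ Finset.range N, a i * Real.exp (s * ((i : ℝ) + 1))) 0 := by
      simpa using hN
    have hev : ∀ᶠ s in 𝓝[<] (0 : ℝ),
        y < ∑ i ∈ Finset.range N, a i * Real.exp (s * ((i : ℝ) + 1)) :=
      (hc.continuousAt.eventually_const_lt h0).filter_mono nhdsWithin_le_nhds
    obtain ⟨t, h1, h2⟩ := (hev.and self_mem_nhdsWithin).exists
    refine ⟨t, h2, h1.le.trans ?_⟩
    exact (hsum t h2).sum_le_tsum _ (fun n _ => mul_nonneg (ha0 n).le (Real.exp_pos _).le)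
  -- small values
  obtain ⟨r, hrt, hry⟩ : ∃ r : ℝ, r ≤ t ∧ G r ≤ y := by
    have hb : ∀ u : ℝ, u ≤ 0 → G (t + u) ≤ Real.exp u * G t := by
      intro u hu
      simp only [hG]
      rw [← tsum_mul_left]
      refine Summable.tsum_le_tsum ?_ (hsum _ (by linarith)) ((hsum t ht0).mul_left _)
      intro n
      have : Real.exp ((t + u) * ((n : ℝ) + 1)) ≤ Real.exp u * Real.exp (t * ((n : ℝ) + 1)) := by
        rw [← Real.exp_add]
        apply Real.exp_le_exp.2
        nlinarith [mul_nonneg (neg_nonneg.2 hu) (Nat.cast_nonneg (α := ℝ) n)]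
      calc _ ≤ a n * (Real.exp u * Real.exp (t * ((n : ℝ) + 1))) :=
            mul_le_mul_of_nonneg_left this (ha0 n).le
        _ = _ := by ring
    have hlim : Tendsto (fun u => Real.exp u * G t) atBot (𝓝 (0 * G t)) :=
      Real.tendsto_exp_atBot.mul_const _
    rw [zero_mul] at hlim
    obtain ⟨u, h1, h2⟩ := ((hlim.eventually_lt_const hy).and (eventually_le_atBot 0)).exists
    exact ⟨t + u, by linarith, (hb u h2).trans h1.le⟩
  obtain ⟨s, hs, hsy⟩ := intermediate_value_Icc hrt
    ((hcont t ht0).mono Set.Icc_subset_Iic_self) ⟨hry, hty⟩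
  refine ⟨s, ⟨lt_of_le_of_lt hs.2 ht0, hsy⟩, ?_⟩
  rintro s' ⟨hs'0, hs'⟩
  change G s' = y at hs'
  rcases lt_trichotomy s' s with h | h | h
  · have := hmono _ _ h (lt_of_le_of_lt hs.2 ht0)
    linarith
  · exact h
  · have := hmono _ _ h hs'0
    linarith

noncomputable def auxCoef (n : ℕ) : ℝ :=
  ((n : ℝ) + 1) ^ (n + 1) * Real.exp (-((n : ℝ) + 1)) / (Nat.factorial (n + 1) : ℝ)

theorem auxCoef_pos (n : ℕ) : 0 < auxCoef n := by
  unfold auxCoef; positivity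

theorem auxCoef_le_one (n : ℕ) : auxCoef n ≤ 1 := by
  have h := Real.pow_div_factorial_le_exp ((n : ℝ) + 1) (by positivity) (n + 1)
  unfold auxCoef
  rw [mul_div_right_comm, Real.exp_neg, ← div_eq_mul_inv]
  exact (div_le_one (Real.exp_pos _)).2 h

theorem auxCoef_ge (n : ℕ) : Real.exp (-1) * (1 / ((n : ℝ) + 1)) ≤ auxCoef n := by
  have h : Stirling.stirlingSeq (n + 1) ≤ Stirling.stirlingSeq 1 :=
    Stirling.stirlingSeq'_antitone (Nat.zero_le n)
  rw [Stirling.stirlingSeq_one, Stirling.stirlingSeq] at h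
  push_cast at h
  have hm : (1 : ℝ) ≤ (n : ℝ) + 1 := by linarith [Nat.cast_nonneg (α := ℝ) n]
  rw [div_le_iff₀ (by positivity), Real.sqrt_mul (by norm_num)] at h
  have h2 : (√2 : ℝ) ≠ 0 := by positivity
  have hs : √((n : ℝ) + 1) ≤ (n : ℝ) + 1 := by
    rw [Real.sqrt_le_left (by linarith)]; nlinarith
  have h3 : ((n + 1).factorial : ℝ) ≤
      Real.exp 1 * ((n : ℝ) + 1) * (((n : ℝ) + 1) ^ (n + 1) * Real.exp (-((n : ℝ) + 1))) := by
    have e1 : (((n : ℝ) + 1) / Real.exp 1) ^ (n + 1)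
        = ((n : ℝ) + 1) ^ (n + 1) * Real.exp (-((n : ℝ) + 1)) := by
      rw [div_pow, ← Real.exp_nat_mul, Real.exp_neg, div_eq_mul_inv]
      push_cast; rw [mul_one]
    rw [← e1]
    refine h.trans ?_
    have e2 : Real.exp 1 / √2 * (√2 * √((n : ℝ) + 1) * (((n : ℝ) + 1) / Real.exp 1) ^ (n + 1))
      = Real.exp 1 * √((n : ℝ) + 1) * (((n : ℝ) + 1) / Real.exp 1) ^ (n + 1) := by
      field_simp
    rw [e2]
    gcongr
  unfold auxCoef
  rw [le_div_iff₀ (by positivity)]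
  calc _ ≤ Real.exp (-1) * (1 / ((n : ℝ) + 1)) * (Real.exp 1 * ((n : ℝ) + 1) *
        (((n : ℝ) + 1) ^ (n + 1) * Real.exp (-((n : ℝ) + 1)))) := by gcongr
    _ = (Real.exp (-1) * Real.exp 1) * ((1 / ((n : ℝ) + 1)) * ((n : ℝ) + 1)) *
        (((n : ℝ) + 1) ^ (n + 1) * Real.exp (-((n : ℝ) + 1))) := by ring
    _ = _ := by
      rw [← Real.exp_add, one_div_mul_cancel (by positivity)]; simp

theorem auxCoef_not_summable : ¬ Summable auxCoef := by
  intro h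
  have h1 : Summable (fun n : ℕ => Real.exp (-1) * (1 / ((n : ℝ) + 1))) :=
    Summable.of_nonneg_of_le (fun n => by positivity) auxCoef_ge h
  rw [summable_mul_left_iff (Real.exp_pos _).ne'] at h1
  apply Real.not_summable_one_div_natCast
  rw [← summable_nat_add_iff 1]
  simpa using h1

theorem borelPsi_eq_s9 (μ θ : ℝ) (hμ0 : 0 < μ) :
    borelPsi μ θ = μ⁻¹ * ∑' n : ℕ, auxCoef n *
      Real.exp ((θ - (μ - 1 - Real.log μ)) * ((n : ℝ) + 1)) := by
  unfold borelPsi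
  rw [← tsum_mul_left]
  congr 1
  ext n
  unfold borelWeight auxCoef
  have e : Real.exp ((θ - (μ - 1 - Real.log μ)) * ((n : ℝ) + 1)) =
      Real.exp (θ * ((n : ℝ) + 1)) * Real.exp (-((n : ℝ) + 1) * μ) * Real.exp ((n : ℝ) + 1)
        * μ ^ (n + 1) := by
    have : μ ^ (n + 1) = Real.exp (((n : ℝ) + 1) * Real.log μ) := by
      rw [← Real.exp_log (pow_pos hμ0 (n + 1)), Real.log_pow]; push_cast; rfl
    rw [this, ← Real.exp_add, ← Real.exp_add, ← Real.exp_add]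
    congr 1; ring
  rw [e, Real.exp_neg ((n : ℝ) + 1), mul_pow, pow_succ, pow_succ]
  field_simp

/-- For `0 < μ < 1`, `ν > 0` and `x > 0`, there is a unique
`θ_x ∈ (-∞, θ₀(μ))`, `θ₀(μ) = μ - 1 - log μ`, with `ψ_μ(θ_x) = x/ν`. -/
theorem borelPsi_exists_unique_solution (μ ν x : ℝ) (hμ0 : 0 < μ) (hμ1 : μ < 1)
    (hν : 0 < ν) (hx : 0 < x) :
    ∃! θx : ℝ, θx < μ - 1 - Real.log μ ∧ borelPsi μ θx = x / ν := by
  obtain ⟨s, ⟨hs0, hs⟩, huniq⟩ := aux_solution auxCoef auxCoef_pos auxCoef_le_one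
    auxCoef_not_summable (μ * (x / ν)) (by positivity)
  refine ⟨s + (μ - 1 - Real.log μ), ⟨by linarith, ?_⟩, ?_⟩
  · rw [borelPsi_eq_s9 μ _ hμ0, add_sub_cancel_right, hs]
    field_simp
  · rintro t ⟨ht, h⟩
    rw [borelPsi_eq_s9 μ _ hμ0, inv_mul_eq_iff_eq_mul₀ hμ0.ne'] at h
    have := huniq (t - (μ - 1 - Real.log μ)) ⟨by linarith, h⟩
    linarith
end

section
/- Let 0 < μ < 1, θ₀(μ) = μ − 1 − log μ, φ_μ(θ) = Σ_{k=1}^∞ e^{θk}·e^{−kμ}(kμ)^{k−1}/k!, ψ_μ(θ) = Σ_{k=1}^∞ k·e^{θk}·e^{−kμ}(kμ)^{k−1}/k!, and let ν > 0, x > 0 and θ < θ₀(μ). Then ψ_μ(θ) = x/ν if and only if φ_μ(θ) = x/(ν + μx). -/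
theorem abel_alt (n : ℕ) : ∑ i ∈ Finset.range (n+2), ((n+2).choose (i+1) : ℝ) * ((i:ℝ)+1)^i * (0-((i:ℝ)+1))^(n+1-i) = 0 := by
  have h2 := congrFun (fwdDiff_iter_pow_eq_zero_of_lt (R := ℝ) (j := n+1) (n := n+2) (by omega)) 0
  rw [fwdDiff_iter_eq_sum_shift, Finset.sum_range_succ'] at h2
  simp at h2
  refine Eq.trans ?_ h2
  apply Finset.sum_congr rfl
  intro i hi
  have hi : i ≤ n+1 := by simpa [Nat.lt_succ_iff] using hi
  rw [show (0-((i:ℝ)+1)) = (-1) * ((i:ℝ)+1) by ring, mul_pow]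
  obtain ⟨d, hd⟩ := Nat.exists_eq_add_of_le hi
  rw [show n+1-i = d by omega, hd, pow_add]
  ring

theorem abel_id (n : ℕ) : ∀ y : ℝ, ∑ i ∈ Finset.range (n+1), ((n+1).choose (i+1) : ℝ) * ((i:ℝ)+1)^i * (y-((i:ℝ)+1))^(n-i) = (n+1) * y^n := by
  induction n with
  | zero => simp
  | succ n ih =>
    intro y
    have hd : ∀ y : ℝ, HasDerivAt (fun y : ℝ => ∑ i ∈ Finset.range (n+1+1), ((n+1+1).choose (i+1) : ℝ) * ((i:ℝ)+1)^i * (y-((i:ℝ)+1))^(n+1-i) - (((n+1:ℕ):ℝ)+1) * y^(n+1)) 0 y := by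
      intro y
      have h1 : HasDerivAt (fun y : ℝ => ∑ i ∈ Finset.range (n+1+1), ((n+1+1).choose (i+1) : ℝ) * ((i:ℝ)+1)^i * (y-((i:ℝ)+1))^(n+1-i)) (∑ i ∈ Finset.range (n+1+1), ((n+1+1).choose (i+1) : ℝ) * ((i:ℝ)+1)^i * (((n+1-i:ℕ):ℝ) * (y-((i:ℝ)+1))^(n+1-i-1) * 1)) y := by
        apply HasDerivAt.fun_sum
        intro i _
        exact (((hasDerivAt_id y).sub_const _).pow _).const_mul _
      have h2 : HasDerivAt (fun y : ℝ => (((n+1:ℕ):ℝ)+1) * y^(n+1)) ((((n+1:ℕ):ℝ)+1) * (((n+1:ℕ):ℝ) * y^n)) y := (hasDerivAt_pow (n+1) y).const_mul _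
      refine (h1.sub h2).congr_deriv ?_
      have := ih y
      rw [Finset.sum_range_succ]
      simp only [Nat.sub_self, Nat.cast_zero, zero_mul, mul_zero, add_zero, mul_one]
      rw [sub_eq_zero]
      push_cast
      rw [← this, Finset.mul_sum]
      apply Finset.sum_congr rfl
      intro i hi
      have hi : i < n+1 := by simpa using hi
      have hc := Nat.choose_mul_succ_eq (n+1) (i+1)
      rw [show n+1-i-1 = n-i by omega]
      rw [show n+1+1-(i+1) = n+1-i by omega] at hc
      have hc' : ((n+1).choose (i+1) : ℝ) * ((n:ℝ)+1+1) = ((n+1+1).choose (i+1) : ℝ) * ((n+1-i:ℕ):ℝ) := by exact_mod_cast hc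
      linear_combination (-((i:ℝ)+1)^i * (y-((i:ℝ)+1))^(n-i)) * hc'
    have hc := is_const_of_deriv_eq_zero (fun y => (hd y).differentiableAt) (fun y => (hd y).deriv) y 0
    have := abel_alt n
    simp only [show n+1+1 = n+2 from rfl, this] at hc
    simp at hc
    push_cast
    linarith

theorem abel_id' (n : ℕ) : ∑ i ∈ Finset.range (n+1), ((n+1).choose (i+1) : ℝ) * ((i:ℝ)+1)^i * ((n-i:ℕ):ℝ)^(n-i) = ((n:ℝ)+1)^(n+1) := by
  rw [pow_succ', ← abel_id n]
  apply Finset.sum_congr rfl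
  intro i hi
  have hi : i ≤ n := by simpa [Nat.lt_succ_iff] using hi
  rw [Nat.cast_sub hi]
  ring_nf

theorem tree_id (z : ℝ) (hz : 0 < z) (hz1 : z < Real.exp (-1)) :
    Summable (fun m : ℕ => (m:ℝ)^m / m.factorial * z^m) ∧
    (∑' i : ℕ, ((i:ℝ)+1)^i / (i+1).factorial * z^(i+1)) * (1 + ∑' i : ℕ, ((i:ℝ)+1)^(i+1) / (i+1).factorial * z^(i+1)) = ∑' i : ℕ, ((i:ℝ)+1)^(i+1) / (i+1).factorial * z^(i+1) := by
  have hez : Real.exp 1 * z < 1 := by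
    calc _ < Real.exp 1 * Real.exp (-1) := by gcongr
      _ = 1 := by rw [← Real.exp_add]; simp
  have hB : Summable (fun m : ℕ => (m:ℝ)^m / m.factorial * z^m) := by
    refine Summable.of_nonneg_of_le (fun m => by positivity) (fun m => ?_) (summable_geometric_of_lt_one (by positivity) hez)
    rw [mul_pow]
    gcongr
    rw [← Real.exp_nat_mul, mul_one]
    exact Real.pow_div_factorial_le_exp _ (by positivity) _
  have hB1 := (summable_nat_add_iff 1).2 hB
  have hA : Summable (fun i : ℕ => ((i:ℝ)+1)^i / (i+1).factorial * z^(i+1)) := by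
    refine Summable.of_nonneg_of_le (fun m => by positivity) (fun m => ?_) hB1
    push_cast
    gcongr
    · linarith [(Nat.cast_nonneg m : (0:ℝ) ≤ m)]
    · omega
  refine ⟨hB, ?_⟩
  have h0 := hB.tsum_eq_zero_add
  simp at h0
  rw [← h0, tsum_mul_tsum_eq_tsum_sum_range_of_summable_norm hA.norm hB.norm]
  apply tsum_congr
  intro n
  rw [← abel_id' n, Finset.sum_div, Finset.sum_mul]
  apply Finset.sum_congr rfl
  intro i hi
  have hi : i ≤ n := by simpa [Nat.lt_succ_iff] using hi
  rw [Nat.cast_choose ℝ (show i+1 ≤ n+1 by omega), show n+1-(i+1) = n-i by omega,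
    show z^(n+1) = z^(i+1) * z^(n-i) by rw [← pow_add]; congr 1; omega]
  have := Nat.factorial_ne_zero (n+1)
  field_simp

theorem borelPsi_eq_iff_borelPhi_eq (μ ν x θ : ℝ) (hμ0 : 0 < μ) (hμ1 : μ < 1)
    (hν : 0 < ν) (hx : 0 < x) (hθ : θ < μ - 1 - Real.log μ) :
    borelPsi μ θ = x / ν ↔ borelPhi μ θ = x / (ν + μ * x) := by
  have hz1 : μ * Real.exp (θ - μ) < Real.exp (-1) := by
    nth_rewrite 1 [← Real.exp_log hμ0]
    rw [← Real.exp_add]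
    exact Real.exp_lt_exp.2 (by linarith)
  obtain ⟨_, h⟩ := tree_id _ (by positivity : 0 < μ * Real.exp (θ - μ)) hz1
  have he : ∀ n : ℕ, Real.exp (θ - μ) ^ (n+1) = Real.exp (θ * ((n : ℝ) + 1)) * Real.exp (-((n : ℝ) + 1) * μ) := by
    intro n
    rw [← Real.exp_nat_mul, ← Real.exp_add]
    congr 1
    push_cast
    ring
  have hφ : (∑' i : ℕ, ((i:ℝ)+1)^i / (i+1).factorial * (μ * Real.exp (θ - μ))^(i+1)) = μ * borelPhi μ θ := by
    rw [borelPhi, ← tsum_mul_left]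
    refine tsum_congr fun n => ?_
    rw [borelWeight, mul_pow, mul_pow, he]
    ring
  have hψ : (∑' i : ℕ, ((i:ℝ)+1)^(i+1) / (i+1).factorial * (μ * Real.exp (θ - μ))^(i+1)) = μ * borelPsi μ θ := by
    rw [borelPsi, ← tsum_mul_left]
    refine tsum_congr fun n => ?_
    rw [borelWeight, mul_pow, mul_pow, he]
    ring
  have hψ0 : 0 ≤ borelPsi μ θ := tsum_nonneg fun n => by unfold borelWeight; positivity
  rw [hφ, hψ] at h
  generalize borelPsi μ θ = P at *
  generalize borelPhi μ θ = F at *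
  have h' : F * (1 + μ * P) = P := mul_left_cancel₀ hμ0.ne' (by linarith)
  have hp : 0 < 1 + μ * P := by positivity
  rw [eq_div_iff hν.ne', eq_div_iff (by positivity)]
  constructor
  · intro e
    apply mul_right_cancel₀ hp.ne'
    linear_combination (ν + μ * x) * h' + e
  · intro e
    linear_combination (1 + μ * P) * e - (ν + μ * x) * h'
end

section
/- (Rate function of the scalar LDP for Hawkes processes, Theorem 3.3.) Let 0 < μ < 1, θ₀(μ) = μ − 1 − log μ, φ_μ(θ) = Σ_{k=1}^∞ e^{θk}·e^{−kμ}(kμ)^{k−1}/k!, ψ_μ(θ) = Σ_{k=1}^∞ k·e^{θk}·e^{−kμ}(kμ)^{k−1}/k!, ν > 0 and x > 0, and let θ_x be the unique θ < θ₀(μ) with ψ_μ(θ) = x/ν. Then the supremum of the set { θ·x − ν(φ_μ(θ) − 1) : θ ≤ θ₀(μ) } equals x·θ_x + ν − νx/(ν + μx), and this supremum is attained at θ = θ_x. -/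
open Finset in
lemma borel_inner_sum (s : ℕ) :
    ∑ p ∈ antidiagonal s, (-1 : ℝ) ^ p.2 * ((p.1 : ℝ) + 1) ^ s /
      (((p.1 + 1).factorial : ℝ) * (p.2.factorial : ℝ)) = if s = 0 then 1 else 0 := by
  rcases Nat.eq_zero_or_pos s with rfl | hs
  · simp
  rw [if_neg hs.ne']
  have h1 := congrFun (fwdDiff_iter_pow_eq_zero_of_lt (R := ℝ) (Nat.lt_succ_self s)) 0
  rw [fwdDiff_iter_eq_sum_shift, Finset.sum_range_succ'] at h1
  simp only [Nat.succ_eq_add_one, Nat.add_sub_add_right, Pi.zero_apply] at h1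
  have h2 : ∀ k ∈ range (s + 1), ((-1 : ℤ) ^ (s - k) * ((s + 1).choose (k + 1) : ℤ)) •
      ((0 : ℝ) + (k + 1) • (1 : ℝ)) ^ s = ((s + 1).factorial : ℝ) * ((-1 : ℝ) ^ (s - k) * ((k : ℝ) + 1) ^ s /
      (((k + 1).factorial : ℝ) * ((s - k).factorial : ℝ))) := by
    intro k hk
    have hk' : k ≤ s := by simpa [Nat.lt_succ_iff] using hk
    have h3 := Nat.choose_mul_factorial_mul_factorial (Nat.succ_le_succ hk')
    simp only [Nat.succ_eq_add_one, Nat.add_sub_add_right] at h3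
    rw [← h3]
    push_cast
    have : ((k + 1).factorial : ℝ) ≠ 0 := by positivity
    have : ((s - k).factorial : ℝ) ≠ 0 := by positivity
    simp only [zsmul_eq_mul, nsmul_eq_mul]
    push_cast
    field_simp
    ring
  rw [Finset.sum_congr rfl h2, ← Finset.mul_sum] at h1
  simp only [zero_nsmul, add_zero, zero_pow hs.ne', smul_zero] at h1
  rw [Finset.Nat.sum_antidiagonal_eq_sum_range_succ_mk]
  have : ((s + 1).factorial : ℝ) ≠ 0 := by positivity
  exact (mul_eq_zero.mp h1).resolve_left this

open Finset in
lemma triple_swap (f : ℕ → ℕ → ℕ → ℝ) (n : ℕ) :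
    ∑ p ∈ antidiagonal n, ∑ q ∈ antidiagonal p.2, f p.1 q.1 q.2 =
    ∑ p ∈ antidiagonal n, ∑ q ∈ antidiagonal p.1, f q.1 q.2 p.2 := by
  rw [Finset.sum_sigma', Finset.sum_sigma']
  refine Finset.sum_nbij' (fun x => ⟨(x.1.1 + x.2.1, x.2.2), (x.1.1, x.2.1)⟩)
    (fun x => ⟨(x.2.1, x.2.2 + x.1.2), (x.2.2, x.1.2)⟩) ?_ ?_ ?_ ?_ ?_
  · rintro ⟨⟨a, b⟩, ⟨c, d⟩⟩ h
    simp at h ⊢; omega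
  · rintro ⟨⟨a, b⟩, ⟨c, d⟩⟩ h
    simp at h ⊢; omega
  · rintro ⟨⟨a, b⟩, ⟨c, d⟩⟩ h
    simp at h
    obtain ⟨h1, rfl⟩ := h
    rfl
  · rintro ⟨⟨a, b⟩, ⟨c, d⟩⟩ h
    simp at h
    obtain ⟨h1, rfl⟩ := h
    rfl
  · rintro ⟨⟨a, b⟩, ⟨c, d⟩⟩ h
    rfl

lemma add_pow_div (a b : ℝ) (n : ℕ) :
    (a + b) ^ n / (n.factorial : ℝ) = ∑ q ∈ Finset.HasAntidiagonal.antidiagonal n,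
      a ^ q.1 / (q.1.factorial : ℝ) * (b ^ q.2 / (q.2.factorial : ℝ)) := by
  rw [(Commute.all a b).add_pow', Finset.sum_div]
  refine Finset.sum_congr rfl fun q hq => ?_
  have hq' : q.1 + q.2 = n := by simpa using hq
  subst hq'
  have h := Nat.add_choose_mul_factorial_mul_factorial q.1 q.2
  rw [← h]
  have h0 : (Nat.choose (q.1 + q.2) q.1 : ℝ) ≠ 0 := by
    have := Nat.choose_pos (Nat.le_add_right q.1 q.2)
    positivity
  have : (q.1.factorial : ℝ) ≠ 0 := by positivity
  have : (q.2.factorial : ℝ) ≠ 0 := by positivity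
  have h5 : (Nat.choose (q.1 + q.2) q.2 : ℝ) = (Nat.choose (q.1 + q.2) q.1 : ℝ) := by
    rw [Nat.choose_symm_add]
  push_cast
  simp only [nsmul_eq_mul]
  try rw [h5]
  field_simp

lemma abel_id_s11 (n : ℕ) :
    ∑ p ∈ Finset.HasAntidiagonal.antidiagonal n, ((p.1 : ℝ) + 1) ^ p.1 / ((p.1 + 1).factorial : ℝ) *
      ((p.2 : ℝ) ^ p.2 / (p.2.factorial : ℝ)) =
      ((n : ℝ) + 1) ^ (n + 1) / ((n + 1).factorial : ℝ) := by
  have h1 : ∀ p ∈ Finset.HasAntidiagonal.antidiagonal n, ((p.1 : ℝ) + 1) ^ p.1 / ((p.1 + 1).factorial : ℝ) *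
      ((p.2 : ℝ) ^ p.2 / (p.2.factorial : ℝ)) =
      ∑ q ∈ Finset.HasAntidiagonal.antidiagonal p.2, (fun i l m : ℕ => ((i : ℝ) + 1) ^ i / ((i + 1).factorial : ℝ) *
        ((-((i : ℝ) + 1)) ^ l / (l.factorial : ℝ) * (((n : ℝ) + 1) ^ m / (m.factorial : ℝ))))
        p.1 q.1 q.2 := by
    intro p hp
    have hp' : p.1 + p.2 = n := by simpa using hp
    have : (p.2 : ℝ) = -((p.1 : ℝ) + 1) + ((n : ℝ) + 1) := by
      rw [← hp']; push_cast; ring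
    simp only
    rw [← Finset.mul_sum, ← add_pow_div, ← this]
  rw [Finset.sum_congr rfl h1]
  refine (triple_swap (fun i l m : ℕ => ((i : ℝ) + 1) ^ i / ((i + 1).factorial : ℝ) *
        ((-((i : ℝ) + 1)) ^ l / (l.factorial : ℝ) * (((n : ℝ) + 1) ^ m / (m.factorial : ℝ)))) n).trans ?_
  have h2 : ∀ p ∈ Finset.HasAntidiagonal.antidiagonal n, ∑ q ∈ Finset.HasAntidiagonal.antidiagonal p.1,
      (fun i l m : ℕ => ((i : ℝ) + 1) ^ i / ((i + 1).factorial : ℝ) *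
        ((-((i : ℝ) + 1)) ^ l / (l.factorial : ℝ) * (((n : ℝ) + 1) ^ m / (m.factorial : ℝ))))
        q.1 q.2 p.2 = (if p.1 = 0 then 1 else 0) * (((n : ℝ) + 1) ^ p.2 / (p.2.factorial : ℝ)) := by
    intro p hp
    rw [← borel_inner_sum, Finset.sum_mul]
    refine Finset.sum_congr rfl fun q hq => ?_
    have hq' : q.1 + q.2 = p.1 := by simpa using hq
    simp only
    rw [← hq', neg_pow ((q.1 : ℝ) + 1), pow_add]
    have : ((q.1 + 1).factorial : ℝ) ≠ 0 := by positivity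
    have : (q.2.factorial : ℝ) ≠ 0 := by positivity
    field_simp
  rw [Finset.sum_congr rfl h2, Finset.sum_eq_single (0, n)]
  · rw [Nat.factorial_succ]
    push_cast
    have : (n.factorial : ℝ) ≠ 0 := by positivity
    have : (n : ℝ) + 1 ≠ 0 := by positivity
    simp
    field_simp
    ring
  · rintro ⟨a, b⟩ h hne
    simp at h hne
    have : a ≠ 0 := by
      rintro rfl
      simp at h
      exact hne rfl h
    simp [this]
  · simp

/-- coefficient bound -/
lemma coef_bound (k : ℕ) : (k : ℝ) ^ k / (k.factorial : ℝ) * √(2 * Real.pi * k) ≤ Real.exp 1 ^ k := by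
  have h := Stirling.le_factorial_stirling k
  have h0 : (0 : ℝ) < k.factorial := by positivity
  rw [div_pow] at h
  have he : 0 < Real.exp 1 ^ k := by positivity
  rw [mul_div_assoc', div_le_iff₀ he] at h
  rw [div_mul_eq_mul_div, div_le_iff₀ h0]
  linarith

lemma coef_bound' (k : ℕ) : (k : ℝ) ^ k / (k.factorial : ℝ) ≤ Real.exp 1 ^ k := by
  rw [← Real.exp_nat_mul, mul_one]
  exact Real.pow_div_factorial_le_exp (k : ℝ) (by positivity) k

lemma summable_b (t : ℝ) (h0 : 0 ≤ t) (h1 : t < Real.exp (-1)) :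
    Summable fun k : ℕ => t ^ k * ((k : ℝ) ^ k / (k.factorial : ℝ)) := by
  have hr : t * Real.exp 1 < 1 := by
    have := mul_lt_mul_of_pos_right h1 (Real.exp_pos 1)
    rwa [← Real.exp_add, neg_add_cancel, Real.exp_zero] at this
  refine Summable.of_nonneg_of_le (fun k => by positivity) (fun k => ?_)
    (summable_geometric_of_lt_one (by positivity) hr)
  rw [mul_pow]
  exact mul_le_mul_of_nonneg_left (coef_bound' k) (by positivity)

lemma summable_a (t : ℝ) (h0 : 0 ≤ t) (h1 : t ≤ Real.exp (-1)) :
    Summable fun n : ℕ => t ^ (n + 1) * (((n : ℝ) + 1) ^ n / ((n + 1).factorial : ℝ)) := by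
  have hr : t * Real.exp 1 ≤ 1 := by
    have := mul_le_mul_of_nonneg_right h1 (Real.exp_pos 1).le
    rwa [← Real.exp_add, neg_add_cancel, Real.exp_zero] at this
  have hs : Summable fun n : ℕ => 1 / (((n + 1 : ℕ) : ℝ) ^ (3 / 2 : ℝ)) :=
    (summable_nat_add_iff 1).mpr (Real.summable_one_div_nat_rpow.mpr (by norm_num))
  refine Summable.of_nonneg_of_le (fun k => by positivity) (fun n => ?_) hs
  have hb := coef_bound (n + 1)
  have hk : (0 : ℝ) < ((n + 1 : ℕ) : ℝ) := by positivity
  have hsq : √((n + 1 : ℕ) : ℝ) ≤ √(2 * Real.pi * ((n + 1 : ℕ) : ℝ)) := by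
    apply Real.sqrt_le_sqrt
    nlinarith [Real.pi_gt_three]
  have h32 : ((n + 1 : ℕ) : ℝ) ^ (3 / 2 : ℝ) = ((n + 1 : ℕ) : ℝ) * √((n + 1 : ℕ) : ℝ) := by
    rw [Real.sqrt_eq_rpow, show (3 / 2 : ℝ) = 1 + 1 / 2 by norm_num, Real.rpow_add hk, Real.rpow_one]
  rw [h32, le_div_iff₀ (by positivity)]
  calc _ = t ^ (n + 1) * (((n + 1 : ℕ) : ℝ) ^ (n + 1) / ((n + 1).factorial : ℝ) *
        √((n + 1 : ℕ) : ℝ)) := by push_cast; ring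
    _ ≤ t ^ (n + 1) * (((n + 1 : ℕ) : ℝ) ^ (n + 1) / ((n + 1).factorial : ℝ) *
        √(2 * Real.pi * ((n + 1 : ℕ) : ℝ))) := by gcongr
    _ ≤ t ^ (n + 1) * Real.exp 1 ^ (n + 1) := by gcongr
    _ = (t * Real.exp 1) ^ (n + 1) := by rw [mul_pow]
    _ ≤ 1 := pow_le_one₀ (by positivity) hr

lemma phi_term (μ θ : ℝ) (h : 0 < μ) (n : ℕ) :
    Real.exp (θ * ((n : ℝ) + 1)) * borelWeight μ n =
      (μ * Real.exp (θ - μ)) ^ (n + 1) * (((n : ℝ) + 1) ^ n / ((n + 1).factorial : ℝ)) / μ := by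
  have : Real.exp (θ - μ) ^ (n + 1) = Real.exp (θ * ((n : ℝ) + 1)) * Real.exp (-((n : ℝ) + 1) * μ) := by
    rw [← Real.exp_nat_mul, ← Real.exp_add]
    congr 1
    push_cast
    ring
  unfold borelWeight
  rw [mul_pow μ, this, mul_pow, pow_succ μ]
  field_simp

lemma t_le (μ θ : ℝ) (h : 0 < μ) (hθ : θ ≤ μ - 1 - Real.log μ) :
    μ * Real.exp (θ - μ) ≤ Real.exp (-1) := by
  nth_rw 1 [← Real.exp_log h]
  rw [← Real.exp_add]
  exact Real.exp_le_exp.mpr (by linarith)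

lemma t_lt (μ θ : ℝ) (h : 0 < μ) (hθ : θ < μ - 1 - Real.log μ) :
    μ * Real.exp (θ - μ) < Real.exp (-1) := by
  nth_rw 1 [← Real.exp_log h]
  rw [← Real.exp_add]
  exact Real.exp_lt_exp.mpr (by linarith)

lemma summable_phi (μ θ : ℝ) (h : 0 < μ) (hθ : θ ≤ μ - 1 - Real.log μ) :
    Summable fun n : ℕ => Real.exp (θ * ((n : ℝ) + 1)) * borelWeight μ n := by
  simp_rw [phi_term μ θ h]
  exact (summable_a _ (by positivity) (t_le μ θ h hθ)).div_const μ

lemma psi_term (μ θ : ℝ) (h : 0 < μ) (n : ℕ) :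
    ((n : ℝ) + 1) * Real.exp (θ * ((n : ℝ) + 1)) * borelWeight μ n =
      (μ * Real.exp (θ - μ)) ^ (n + 1) *
        (((n + 1 : ℕ) : ℝ) ^ (n + 1) / ((n + 1).factorial : ℝ)) / μ := by
  rw [mul_assoc, phi_term μ θ h]
  push_cast
  ring

lemma summable_psi (μ θ : ℝ) (h : 0 < μ) (hθ : θ < μ - 1 - Real.log μ) :
    Summable fun n : ℕ => ((n : ℝ) + 1) * Real.exp (θ * ((n : ℝ) + 1)) * borelWeight μ n := by
  simp_rw [psi_term μ θ h]
  exact ((summable_nat_add_iff 1).mpr (summable_b _ (by positivity) (t_lt μ θ h hθ))).div_const μ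

lemma phi_psi (μ θ : ℝ) (h : 0 < μ) (hθ : θ < μ - 1 - Real.log μ) :
    borelPhi μ θ * (1 + μ * borelPsi μ θ) = borelPsi μ θ := by
  have hμ := h.ne'
  have ht0 : 0 ≤ μ * Real.exp (θ - μ) := by positivity
  have ha := summable_a _ ht0 (t_le μ θ h hθ.le)
  have hb := summable_b _ ht0 (t_lt μ θ h hθ)
  have e1 : borelPhi μ θ = (∑' n : ℕ, (μ * Real.exp (θ - μ)) ^ (n + 1) *
      (((n : ℝ) + 1) ^ n / ((n + 1).factorial : ℝ))) / μ := by
    rw [← tsum_div_const]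
    exact tsum_congr fun n => phi_term μ θ h n
  have e2 : borelPsi μ θ = (∑' n : ℕ, (μ * Real.exp (θ - μ)) ^ (n + 1) *
        (((n + 1 : ℕ) : ℝ) ^ (n + 1) / ((n + 1).factorial : ℝ))) / μ := by
    rw [← tsum_div_const]
    exact tsum_congr fun n => psi_term μ θ h n
  generalize μ * Real.exp (θ - μ) = t at *
  have e3 : 1 + μ * borelPsi μ θ = ∑' k : ℕ, t ^ k * ((k : ℝ) ^ k / (k.factorial : ℝ)) := by
    rw [hb.tsum_eq_zero_add, e2, mul_div_cancel₀ _ hμ]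
    simp
  rw [e3, e1, e2, div_mul_eq_mul_div]
  congr 1
  rw [tsum_mul_tsum_eq_tsum_sum_antidiagonal_of_summable_norm ha.norm hb.norm]
  refine tsum_congr fun n => ?_
  push_cast
  rw [← abel_id_s11, Finset.mul_sum]
  refine Finset.sum_congr rfl fun p hp => ?_
  have hp' : p.1 + p.2 = n := by simpa using hp
  rw [← hp']
  ring

lemma weight_nonneg (μ : ℝ) (h : 0 < μ) (n : ℕ) : 0 ≤ borelWeight μ n := by
  unfold borelWeight
  positivity

lemma phi_ge (μ θ θ' : ℝ) (h : 0 < μ) (hθ : θ < μ - 1 - Real.log μ)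
    (hθ' : θ' ≤ μ - 1 - Real.log μ) :
    borelPhi μ θ + borelPsi μ θ * (θ' - θ) ≤ borelPhi μ θ' := by
  unfold borelPhi borelPsi
  rw [← tsum_mul_right, ← (summable_phi μ θ h hθ.le).tsum_add ((summable_psi μ θ h hθ).mul_right _)]
  refine Summable.tsum_le_tsum (fun n => ?_)
    ((summable_phi μ θ h hθ.le).add ((summable_psi μ θ h hθ).mul_right _))
    (summable_phi μ θ' h hθ')
  have hw := weight_nonneg μ h n
  have h1 := Real.add_one_le_exp ((θ' - θ) * ((n : ℝ) + 1))
  have h2 : Real.exp (θ' * ((n : ℝ) + 1)) =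
      Real.exp (θ * ((n : ℝ) + 1)) * Real.exp ((θ' - θ) * ((n : ℝ) + 1)) := by
    rw [← Real.exp_add]
    congr 1
    ring
  rw [h2]
  have h3 : 0 ≤ Real.exp (θ * ((n : ℝ) + 1)) * borelWeight μ n := by positivity
  have h4 := mul_le_mul_of_nonneg_left h1 h3
  linarith

theorem hawkes_rate_function (μ ν x θx : ℝ) (hμ0 : 0 < μ) (hμ1 : μ < 1)
    (hν : 0 < ν) (hx : 0 < x) (hθx : θx < μ - 1 - Real.log μ)
    (hψ : borelPsi μ θx = x / ν) :
    IsGreatest {y : ℝ | ∃ θ ≤ μ - 1 - Real.log μ, y = θ * x - ν * (borelPhi μ θ - 1)}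
        (x * θx + ν - ν * x / (ν + μ * x)) ∧
      θx * x - ν * (borelPhi μ θx - 1) = x * θx + ν - ν * x / (ν + μ * x) := by
  have hpos : 0 < ν + μ * x := by positivity
  have h1 := phi_psi μ θx hμ0 hθx
  have hphi : borelPhi μ θx = x / (ν + μ * x) := by
    rw [hψ] at h1
    field_simp at h1
    rw [eq_div_iff hpos.ne']
    linarith
  have heq : θx * x - ν * (borelPhi μ θx - 1) = x * θx + ν - ν * x / (ν + μ * x) := by
    rw [hphi]
    ring
  refine ⟨⟨⟨θx, hθx.le, heq.symm⟩, ?_⟩, heq⟩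
  rintro y ⟨θ, hθ, rfl⟩
  rw [← heq]
  have h2 := phi_ge μ θx θ hμ0 hθx hθ
  rw [hψ] at h2
  have h3 := mul_le_mul_of_nonneg_left h2 hν.le
  have h4 : ν * (borelPhi μ θx + x / ν * (θ - θx)) = ν * borelPhi μ θx + x * (θ - θx) := by
    field_simp
  rw [h4] at h3
  linarith
end

section
/- Let 0 < μ < 1, θ₀(μ) = μ − 1 − log μ, φ_μ(θ) = Σ_{k=1}^∞ e^{θk}·e^{−kμ}(kμ)^{k−1}/k!, ν > 0, and for x > 0 define Λ*(x) = sup{ θx − ν(φ_μ(θ) − 1) : θ ≤ θ₀(μ) }. Then Λ*(x) tends to ν as x tends to 0 from the right. -/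
theorem borelWeight_nonneg' (μ : ℝ) (hμ : 0 < μ) (n : ℕ) : 0 ≤ borelWeight μ n := by
  unfold borelWeight; positivity

theorem borelPhi_nonneg' (μ θ : ℝ) (hμ : 0 < μ) : 0 ≤ borelPhi μ θ :=
  tsum_nonneg fun n => mul_nonneg (Real.exp_pos _).le (borelWeight_nonneg' μ hμ n)

theorem borelPhi_small (μ t ε : ℝ) (hμ : 0 < μ) (hε : 0 < ε) :
    ∃ θ ≤ t, borelPhi μ θ ≤ ε := by
  by_cases hs : Summable fun n : ℕ => Real.exp (t * ((n : ℝ) + 1)) * borelWeight μ n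
  · have hP := borelPhi_nonneg' μ t hμ
    have key : ∀ d : ℝ, 0 ≤ d → borelPhi μ (t - d) ≤ Real.exp (-d) * borelPhi μ t := by
      intro d hd
      have hle : ∀ n : ℕ, Real.exp ((t - d) * ((n : ℝ) + 1)) * borelWeight μ n ≤
          Real.exp (-d) * (Real.exp (t * ((n : ℝ) + 1)) * borelWeight μ n) := by
        intro n
        rw [← mul_assoc, ← Real.exp_add]
        refine mul_le_mul_of_nonneg_right (Real.exp_le_exp.mpr ?_) (borelWeight_nonneg' μ hμ n)
        have : 0 ≤ d * (n : ℝ) := by positivity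
        nlinarith
      have hs2 := hs.mul_left (Real.exp (-d))
      unfold borelPhi
      rw [← tsum_mul_left]
      exact (Summable.of_nonneg_of_le (fun n => mul_nonneg (Real.exp_pos _).le
        (borelWeight_nonneg' μ hμ n)) hle hs2).tsum_le_tsum hle hs2
    have hd : 0 ≤ borelPhi μ t / ε := by positivity
    refine ⟨t - borelPhi μ t / ε, by linarith, (key _ hd).trans ?_⟩
    rw [Real.exp_neg, inv_mul_le_iff₀ (Real.exp_pos _)]
    have h1 := Real.add_one_le_exp (borelPhi μ t / ε)
    calc borelPhi μ t = borelPhi μ t / ε * ε := by field_simp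
      _ ≤ _ := mul_le_mul_of_nonneg_right (by linarith) hε.le
  · exact ⟨t, le_rfl, by unfold borelPhi; rw [tsum_eq_zero_of_not_summable hs]; exact hε.le⟩

/-- For `0 < μ < 1`, `ν > 0` and `x > 0`, with
`Λ*(x) = sup{θx - ν(φ_μ(θ) - 1) : θ ≤ θ₀(μ)}`, `θ₀(μ) = μ - 1 - log μ`, we have
`Λ*(x) → ν` as `x → 0⁺`. -/
theorem hawkes_rate_function_tendsto_at_zero (μ ν : ℝ) (hμ0 : 0 < μ) (hμ1 : μ < 1)
    (hν : 0 < ν) :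
    Filter.Tendsto
      (fun x : ℝ =>
        sSup {y : ℝ | ∃ θ ≤ μ - 1 - Real.log μ, y = θ * x - ν * (borelPhi μ θ - 1)})
      (nhdsWithin 0 (Set.Ioi 0)) (nhds ν) := by
  generalize μ - 1 - Real.log μ = t
  have hub : ∀ x : ℝ, 0 < x →
      ∀ y ∈ {y : ℝ | ∃ θ ≤ t, y = θ * x - ν * (borelPhi μ θ - 1)}, y ≤ t * x + ν := by
    rintro x hx y ⟨θ, hθ, rfl⟩
    have h1 := mul_le_mul_of_nonneg_right hθ hx.le
    have h2 := mul_nonneg hν.le (borelPhi_nonneg' μ θ hμ0)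
    linarith
  have hlim : ∀ c d : ℝ, Filter.Tendsto (fun x : ℝ => c * x + d)
      (nhdsWithin 0 (Set.Ioi 0)) (nhds d) := by
    intro c d
    have : Continuous fun x : ℝ => c * x + d := by fun_prop
    have h := this.tendsto 0
    simp only [mul_zero, zero_add] at h
    exact h.mono_left nhdsWithin_le_nhds
  rw [tendsto_order]
  constructor
  · intro a ha
    obtain ⟨θ, hθ, hφ⟩ := borelPhi_small μ t ((ν - a) / 2 / ν) hμ0
      (div_pos (by linarith) hν)
    rw [le_div_iff₀ hν] at hφ
    filter_upwards [(hlim θ ((ν + a) / 2)).eventually_const_lt (by linarith : a < (ν + a) / 2),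
      self_mem_nhdsWithin] with x h1 hx
    refine lt_of_lt_of_le h1 (le_trans ?_ (le_csSup ⟨_, hub x hx⟩ ⟨θ, hθ, rfl⟩))
    linarith
  · intro b hb
    filter_upwards [(hlim t ν).eventually_lt_const hb, self_mem_nhdsWithin] with x h1 hx
    exact lt_of_le_of_lt (csSup_le ⟨_, t, le_rfl, rfl⟩ (hub x hx)) h1
end
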